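/- Let n ≥ 1 and let λ_1, …, λ_n > 0. For each i, let ψ_i ∈ P^r satisfy Γ_{λ_i}(ψ_i) = L(1), set e_i(t) = exp(−λ_i(t−t₀)) − ψ_i(t) and C_i = Υ(r, kλ_i) · sup_{t∈I} |e_i(t)/e_i(t₀)| + 1 with Υ(r, ϱ) = √(3/(2(2r+1)+ϱ)). Suppose a_1, …, a_n ∈ P^r and v_1, …, v_n ∈ P^r satisfy Γ_{λ_i}(v_i) = a_i for each i. Then sup_{t∈I} (Σ_{i=1}^n v_i(t)²)^{1/2} ≤ (max_{1≤i≤n} C_i) · k^{1/2} · (∫_I Σ_{i=1}^n a_i(t)² dt)^{1/2}. (This is the L∞(H)-stability of the inverse of the fully discrete parabolic dG operator, expressed in an orthonormal eigenbasis of the discrete elliptic operator with eigenvalues λ_i.) -/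

import Mathlib

open Polynomial MeasureTheory intervalIntegral

/-- The rescaled Legendre polynomials on `[t₀, t₁]`: `K i` has degree `i`,
`K i (t₁) = 1`, `K i (t₀) = (-1)^i`, and they are `L²(t₀,t₁)`-orthogonal with
`∫ K i ^ 2 = (t₁ - t₀)/(2 i + 1)`. -/
def IsLegendreBasis (t₀ t₁ : ℝ) (K : ℕ → Polynomial ℝ) : Prop :=
  (∀ i, (K i).natDegree = i) ∧ (∀ i, (K i).eval t₁ = 1) ∧
  (∀ i, (K i).eval t₀ = (-1 : ℝ) ^ i) ∧
  (∀ i j, (∫ t in t₀..t₁, (K i).eval t * (K j).eval t) =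
    if i = j then (t₁ - t₀) / (2 * (i : ℝ) + 1) else 0)

/-- The lifting operator `L(z) = (z/k) ∑_{i=0}^r (-1)^i (2i+1) K_i`. -/
noncomputable def Lop (t₀ t₁ : ℝ) (r : ℕ) (K : ℕ → Polynomial ℝ) (z : ℝ) : Polynomial ℝ :=
  Polynomial.C (z / (t₁ - t₀)) *
    ∑ i ∈ Finset.range (r + 1), Polynomial.C ((-1 : ℝ) ^ i * (2 * (i : ℝ) + 1)) * K i

/-- The endpoint lifting operator `L̂(z) = (z/k) ∑_{i=0}^r (2i+1) K_i`. -/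
noncomputable def LopE (t₀ t₁ : ℝ) (r : ℕ) (K : ℕ → Polynomial ℝ) (z : ℝ) : Polynomial ℝ :=
  Polynomial.C (z / (t₁ - t₀)) *
    ∑ i ∈ Finset.range (r + 1), Polynomial.C (2 * (i : ℝ) + 1) * K i

/-- The scalar dG operator `Γ_λ(v) = v' + L(v(t₀)) + λ v`. -/
noncomputable def Gam (t₀ t₁ : ℝ) (r : ℕ) (K : ℕ → Polynomial ℝ) (lam : ℝ)
    (v : Polynomial ℝ) : Polynomial ℝ :=
  Polynomial.derivative v + Lop t₀ t₁ r K (v.eval t₀) + Polynomial.C lam * v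

/-- The dG error function `e(t) = exp(-λ (t - t₀)) - ψ(t)`. -/
noncomputable def errF (t₀ lam : ℝ) (ψ : Polynomial ℝ) (t : ℝ) : ℝ :=
  Real.exp (-lam * (t - t₀)) - ψ.eval t

/-- `Υ(r, ϱ) = √(3 / (2 (2 r + 1) + ϱ))`. -/
noncomputable def Upsilon (r : ℕ) (ρ : ℝ) : ℝ :=
  Real.sqrt (3 / (2 * (2 * (r : ℝ) + 1) + ρ))

/-- The stability constant `C^{L²} = Υ(r, kλ) ⬝ sup_{t ∈ I} |e(t)/e(t₀)| + 1`. -/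
noncomputable def CL2 (t₀ t₁ : ℝ) (r : ℕ) (lam : ℝ) (ψ : Polynomial ℝ) : ℝ :=
  Upsilon r ((t₁ - t₀) * lam) *
    (⨆ t ∈ Set.Ioc t₀ t₁, |errF t₀ lam ψ t / errF t₀ lam ψ t₀|) + 1

/-- Cauchy–Schwarz inequality for interval integrals of continuous functions. -/
lemma sq_integral_mul_le {a b : ℝ} (hab : a ≤ b) {f g : ℝ → ℝ}
    (hf : Continuous f) (hg : Continuous g) :
    (∫ x in a..b, f x * g x) ^ 2 ≤ (∫ x in a..b, f x ^ 2) * ∫ x in a..b, g x ^ 2 := by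
  have key : ∀ x : ℝ, 0 ≤ (∫ t in a..b, g t ^ 2) * (x * x) +
      (-2 * ∫ t in a..b, f t * g t) * x + ∫ t in a..b, f t ^ 2 := by
    intro x
    have h : 0 ≤ ∫ t in a..b, (f t - x * g t) ^ 2 :=
      integral_nonneg hab fun t _ => sq_nonneg _
    have e : ∫ t in a..b, (f t - x * g t) ^ 2 =
        ∫ t in a..b, (x * x) * g t ^ 2 + (-2 * x) * (f t * g t) + f t ^ 2 := by
      congr 1; ext t; ring
    rw [e, intervalIntegral.integral_add (by apply Continuous.intervalIntegrable; fun_prop)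
        (by apply Continuous.intervalIntegrable; fun_prop),
      intervalIntegral.integral_add (by apply Continuous.intervalIntegrable; fun_prop)
        (by apply Continuous.intervalIntegrable; fun_prop),
      intervalIntegral.integral_const_mul, intervalIntegral.integral_const_mul] at h
    linarith
  have := discrim_le_zero key
  rw [discrim] at this
  nlinarith

section Legendre

open Set

variable {t₀ t₁ : ℝ} {K : ℕ → ℝ[X]}

lemma intervalIntegrable_eval_mul (p q : ℝ[X]) (a b : ℝ) :
    IntervalIntegrable (fun t => p.eval t * q.eval t) volume a b :=
  (p.continuous.mul q.continuous).intervalIntegrable _ _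

lemma integral_add_eval_mul (p q w : ℝ[X]) (a b : ℝ) :
    ∫ t in a..b, (p + q).eval t * w.eval t =
      (∫ t in a..b, p.eval t * w.eval t) + ∫ t in a..b, q.eval t * w.eval t := by
  rw [← intervalIntegral.integral_add (intervalIntegrable_eval_mul ..) (intervalIntegrable_eval_mul ..)]
  simp only [eval_add, add_mul]

lemma integral_C_mul_eval_mul (c : ℝ) (p w : ℝ[X]) (a b : ℝ) :
    ∫ t in a..b, (C c * p).eval t * w.eval t = c * ∫ t in a..b, p.eval t * w.eval t := by
  rw [← intervalIntegral.integral_const_mul]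
  simp only [eval_mul, eval_C, mul_assoc]

/-- A subspace containing `K i` for `i < m` contains every polynomial of degree `< m`. -/
lemma IsLegendreBasis.mem_of_degree_lt (hK : IsLegendreBasis t₀ t₁ K) {m : ℕ}
    (W : Submodule ℝ ℝ[X]) (hW : ∀ i < m, K i ∈ W) {p : ℝ[X]} (hp : p.degree < m) : p ∈ W := by
  have hne : ∀ i, K i ≠ 0 := fun i h => by simpa [h] using hK.2.1 i
  let S : Polynomial.Sequence ℝ :=
    ⟨K, fun i => by rw [degree_eq_natDegree (hne i), hK.1 i]⟩
  have hspan : Submodule.span ℝ (K '' Iio m) = degreeLT ℝ m :=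
    S.span_degreeLT fun i _ => (leadingCoeff_ne_zero.mpr (hne i)).isUnit
  have hle : Submodule.span ℝ (K '' Iio m) ≤ W := by
    rw [Submodule.span_le]
    rintro _ ⟨i, hi, rfl⟩
    exact hW i hi
  exact hle (hspan ▸ mem_degreeLT.mpr hp)

/-- The polynomials `p` satisfying `∫ w p = c p(s)`. -/
noncomputable def testSpace (t₀ t₁ s c : ℝ) (w : ℝ[X]) : Submodule ℝ ℝ[X] where
  carrier := {p | ∫ t in t₀..t₁, p.eval t * w.eval t = c * p.eval s}
  zero_mem' := by simp
  add_mem' {p q} hp hq := by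
    simp only [mem_ofPred_eq] at *
    rw [integral_add_eval_mul, hp, hq, eval_add, mul_add]
  smul_mem' x p hp := by
    simp only [mem_ofPred_eq] at *
    rw [smul_eq_C_mul, integral_C_mul_eval_mul, hp, eval_mul, eval_C]
    ring

lemma IsLegendreBasis.integral_mul_eq_zero (hK : IsLegendreBasis t₀ t₁ K) {m : ℕ}
    {p : ℝ[X]} (hp : p.degree < m) : ∫ t in t₀..t₁, p.eval t * (K m).eval t = 0 := by
  have : p ∈ testSpace t₀ t₁ t₀ 0 (K m) := by
    refine hK.mem_of_degree_lt _ (fun i hi => ?_) hp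
    change _ = _
    rw [hK.2.2.2, if_neg hi.ne, zero_mul]
  exact Eq.trans this (zero_mul _)

lemma Lop_eq_C_mul (r : ℕ) (z : ℝ) : Lop t₀ t₁ r K z = C z * Lop t₀ t₁ r K 1 := by
  rw [Lop, Lop, ← mul_assoc, ← C_mul]
  congr 2
  ring

lemma IsLegendreBasis.integral_mul_Lop (hK : IsLegendreBasis t₀ t₁ K) (ht : t₀ < t₁) {r : ℕ}
    (z : ℝ) {p : ℝ[X]} (hp : p.natDegree ≤ r) :
    ∫ t in t₀..t₁, p.eval t * (Lop t₀ t₁ r K z).eval t = z * p.eval t₀ := by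
  have hk : t₁ - t₀ ≠ 0 := (sub_pos.mpr ht).ne'
  suffices p ∈ testSpace t₀ t₁ t₀ z (Lop t₀ t₁ r K z) from this
  refine hK.mem_of_degree_lt (m := r + 1) _ (fun i hi => ?_) ?_
  · change _ = _
    have : ∀ t, (K i).eval t * (Lop t₀ t₁ r K z).eval t = z / (t₁ - t₀) *
        ∑ j ∈ Finset.range (r + 1), ((-1 : ℝ) ^ j * (2 * (j : ℝ) + 1)) *
          ((K i).eval t * (K j).eval t) := by
      intro t
      simp only [Lop, eval_mul, eval_C, eval_finsetSum]
      rw [mul_left_comm, Finset.mul_sum]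
      congr 1
      exact Finset.sum_congr rfl fun j _ => by ring
    simp only [this]
    rw [intervalIntegral.integral_const_mul, intervalIntegral.integral_finsetSum
      fun j _ => (intervalIntegrable_eval_mul ..).const_mul _]
    simp only [intervalIntegral.integral_const_mul, hK.2.2.2, hK.2.2.1]
    rw [Finset.sum_eq_single i (fun j _ hj => by rw [if_neg hj.symm, mul_zero])
      (fun h => absurd (Finset.mem_range.mpr hi) h), if_pos rfl]
    have : (2 * (i : ℝ) + 1) ≠ 0 := by positivity
    field_simp
  · exact (degree_le_of_natDegree_le hp).trans_lt (mod_cast r.lt_succ_self)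


lemma degree_derivative_lt_of_natDegree_le {p : ℝ[X]} {r : ℕ} (hp : p.natDegree ≤ r) :
    (derivative p).degree < r := by
  rcases eq_or_ne p 0 with rfl | h
  · simp
  · exact (degree_derivative_lt h).trans_le (degree_le_of_natDegree_le hp)

/-- Energy identity for the dG operator. -/
lemma IsLegendreBasis.integral_Gam_mul_self (hK : IsLegendreBasis t₀ t₁ K) (ht : t₀ < t₁)
    {r : ℕ} (lam : ℝ) {v : ℝ[X]} (hv : v.natDegree ≤ r) :
    ∫ t in t₀..t₁, (Gam t₀ t₁ r K lam v).eval t * v.eval t =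
      (v.eval t₁ ^ 2 + v.eval t₀ ^ 2) / 2 + lam * ∫ t in t₀..t₁, v.eval t ^ 2 := by
  have hd : ∫ t in t₀..t₁, (derivative v).eval t * v.eval t =
      v.eval t₁ ^ 2 / 2 - v.eval t₀ ^ 2 / 2 := by
    refine integral_eq_sub_of_hasDerivAt (f := fun t => v.eval t ^ 2 / 2) (fun t _ => ?_)
      (intervalIntegrable_eval_mul ..)
    refine (((v.hasDerivAt t).pow 2).div_const 2).congr_deriv ?_
    push_cast
    ring
  have hL := hK.integral_mul_Lop ht (v.eval t₀) hv
  simp only [mul_comm (v.eval _) ((Lop ..).eval _)] at hL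
  rw [Gam, integral_add_eval_mul, integral_add_eval_mul, integral_C_mul_eval_mul, hd, hL]
  simp only [← pow_two]
  ring

/-- Testing the dG operator with the Legendre polynomial of top degree. -/
lemma IsLegendreBasis.integral_Gam_sub_mul (hK : IsLegendreBasis t₀ t₁ K) (ht : t₀ < t₁)
    {r : ℕ} (lam : ℝ) {v : ℝ[X]} (hv : v.natDegree ≤ r) :
    ∫ t in t₀..t₁, ((Gam t₀ t₁ r K lam v).eval t - lam * v.eval t) * (K r).eval t =
      v.eval t₀ * (-1) ^ r := by
  have hL := hK.integral_mul_Lop ht (v.eval t₀) (hK.1 r).le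
  simp only [mul_comm ((K r).eval _) ((Lop ..).eval _), hK.2.2.1] at hL
  rw [← hL, ← zero_add (∫ t in t₀..t₁, (Lop ..).eval t * _),
    ← hK.integral_mul_eq_zero (degree_derivative_lt_of_natDegree_le hv), ← integral_add_eval_mul]
  congr 1
  ext t
  simp only [Gam, eval_add, eval_mul, eval_C]
  ring

/-- Control of the initial value by the `L²` norm of the data. -/
lemma IsLegendreBasis.eval_left_sq_le (hK : IsLegendreBasis t₀ t₁ K) (ht : t₀ < t₁)
    {r : ℕ} {lam : ℝ} (hlam : 0 < lam) {v : ℝ[X]} (hv : v.natDegree ≤ r) :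
    v.eval t₀ ^ 2 ≤ 3 / (2 * (2 * (r : ℝ) + 1) + (t₁ - t₀) * lam) * (t₁ - t₀) *
      ∫ t in t₀..t₁, (Gam t₀ t₁ r K lam v).eval t ^ 2 := by
  have hk : 0 < t₁ - t₀ := sub_pos.mpr ht
  set a := Gam t₀ t₁ r K lam v with ha
  have hen := hK.integral_Gam_mul_self ht lam hv
  have hcs := sq_integral_mul_le ht.le (f := fun t => a.eval t - lam * v.eval t)
    (a.continuous.sub (v.continuous.const_mul lam)) (K r).continuous
  have hnorm := hK.2.2.2 r r
  rw [if_pos rfl] at hnorm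
  simp only [← pow_two] at hnorm
  rw [← ha] at hen
  have htest := hK.integral_Gam_sub_mul ht lam hv
  rw [← ha] at htest
  have hexp : ∫ t in t₀..t₁, (a.eval t - lam * v.eval t) ^ 2 =
      (∫ t in t₀..t₁, a.eval t ^ 2) - 2 * lam * (∫ t in t₀..t₁, a.eval t * v.eval t) +
        lam ^ 2 * ∫ t in t₀..t₁, v.eval t ^ 2 := by
    have e : ∀ t, (a.eval t - lam * v.eval t) ^ 2 =
        a.eval t ^ 2 + (-2 * lam) * (a.eval t * v.eval t) + lam ^ 2 * v.eval t ^ 2 :=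
      fun t => by ring
    have ca := a.continuous
    have cv := v.continuous
    simp only [e]
    rw [intervalIntegral.integral_add (by apply Continuous.intervalIntegrable; fun_prop)
        (by apply Continuous.intervalIntegrable; fun_prop),
      intervalIntegral.integral_add (by apply Continuous.intervalIntegrable; fun_prop)
        (by apply Continuous.intervalIntegrable; fun_prop),
      intervalIntegral.integral_const_mul, intervalIntegral.integral_const_mul]
    ring
  rw [htest, hexp, hen, hnorm, mul_pow, ← pow_mul, mul_comm r 2, pow_mul, neg_one_sq, one_pow,
    mul_one] at hcs
  have hB : 0 ≤ ∫ t in t₀..t₁, v.eval t ^ 2 := integral_nonneg ht.le fun _ _ => sq_nonneg _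
  have hA : 0 ≤ ∫ t in t₀..t₁, a.eval t ^ 2 := integral_nonneg ht.le fun _ _ => sq_nonneg _
  generalize (∫ t in t₀..t₁, v.eval t ^ 2) = B at *
  generalize (∫ t in t₀..t₁, a.eval t ^ 2) = A at *
  have hr : 0 < 2 * (r : ℝ) + 1 := by positivity
  generalize 2 * (r : ℝ) + 1 = m at *
  have hbound : v.eval t₀ ^ 2 * (m + (t₁ - t₀) * lam) ≤ (t₁ - t₀) * A := by
    rw [← mul_div_assoc, le_div_iff₀ hr] at hcs
    have h1 : 0 ≤ (t₁ - t₀) * (lam * v.eval t₁ ^ 2) := by positivity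
    have h2 : 0 ≤ (t₁ - t₀) * (lam ^ 2 * B) := by positivity
    nlinarith
  have hρ : 0 < (t₁ - t₀) * lam := by positivity
  rw [div_mul_eq_mul_div, div_mul_eq_mul_div, le_div_iff₀ (by positivity)]
  nlinarith [mul_nonneg (sq_nonneg (v.eval t₀)) hr.le, mul_nonneg (sq_nonneg (v.eval t₀)) hρ.le]

/-- The dG error function does not vanish at the initial time. -/
lemma errF_left_ne_zero {r : ℕ} {lam : ℝ} (hlam : 0 < lam) {ψ : ℝ[X]}
    (hψ : Gam t₀ t₁ r K lam ψ = Lop t₀ t₁ r K 1) : errF t₀ lam ψ t₀ ≠ 0 := by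
  intro h
  have h1 : ψ.eval t₀ = 1 := by
    simp only [errF, sub_self, mul_zero, Real.exp_zero] at h
    linarith
  rw [Gam, h1] at hψ
  have h2 : derivative ψ + C lam * ψ = 0 := by linear_combination hψ
  have h3 := congrArg (fun p => p.coeff ψ.natDegree) h2
  simp only [coeff_add, coeff_derivative, coeff_C_mul, coeff_zero,
    coeff_eq_zero_of_natDegree_lt ψ.natDegree.lt_succ_self, zero_mul, zero_add, coeff_natDegree,
    mul_eq_zero, hlam.ne', false_or, leadingCoeff_eq_zero] at h3
  simp [h3] at h1

/-- `v - (v(t₀) / e(t₀)) e` solves the continuous problem with zero initial value, hence is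
bounded by the `L²` norm of the data. -/
lemma abs_eval_sub_mul_errF_le {r : ℕ} {lam : ℝ} (hlam : 0 < lam) {ψ v : ℝ[X]}
    (hψ : Gam t₀ t₁ r K lam ψ = Lop t₀ t₁ r K 1) {t : ℝ} (ht : t ∈ Ioc t₀ t₁) :
    |v.eval t - v.eval t₀ * (errF t₀ lam ψ t / errF t₀ lam ψ t₀)| ≤
      √(t₁ - t₀) * √(∫ s in t₀..t₁, (Gam t₀ t₁ r K lam v).eval s ^ 2) := by
  have he := errF_left_ne_zero hlam hψ
  set e₀ := errF t₀ lam ψ t₀ with he₀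
  have he₀' : e₀ = 1 - ψ.eval t₀ := by simp [he₀, errF]
  set a := Gam t₀ t₁ r K lam v with ha
  have hψs : ∀ s, (derivative ψ).eval s + lam * ψ.eval s = e₀ * (Lop t₀ t₁ r K 1).eval s := by
    intro s
    have := congrArg (eval s) hψ
    rw [Gam, Lop_eq_C_mul] at this
    simp only [eval_add, eval_mul, eval_C] at this
    rw [he₀']
    linear_combination this
  have has : ∀ s, a.eval s =
      (derivative v).eval s + v.eval t₀ * (Lop t₀ t₁ r K 1).eval s + lam * v.eval s := by
    intro s
    rw [ha, Gam, Lop_eq_C_mul]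
    simp only [eval_add, eval_mul, eval_C]
  have hderiv : ∀ s, HasDerivAt
      (fun s => Real.exp (lam * (s - t)) * (v.eval s - v.eval t₀ * (errF t₀ lam ψ s / e₀)))
      (Real.exp (lam * (s - t)) * a.eval s) s := by
    intro s
    have d1 : HasDerivAt (fun s => Real.exp (lam * (s - t))) (Real.exp (lam * (s - t)) * lam) s := by
      simpa using (((hasDerivAt_id s).sub_const t).const_mul lam).exp
    have d2 : HasDerivAt (fun s => Real.exp (-lam * (s - t₀)))
        (Real.exp (-lam * (s - t₀)) * -lam) s := by
      simpa using (((hasDerivAt_id s).sub_const t₀).const_mul (-lam)).exp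
    have d3 := (((d2.sub (ψ.hasDerivAt s)).div_const e₀).const_mul (v.eval t₀))
    refine (d1.mul ((v.hasDerivAt s).sub d3)).congr_deriv ?_
    simp only [Pi.sub_apply]
    rw [has]
    field_simp
    linear_combination v.eval t₀ * hψs s
  have hcont : Continuous fun s => Real.exp (lam * (s - t)) := by fun_prop
  have hint : ∫ s in t₀..t, Real.exp (lam * (s - t)) * a.eval s =
      v.eval t - v.eval t₀ * (errF t₀ lam ψ t / e₀) := by
    rw [integral_eq_sub_of_hasDerivAt (fun s _ => hderiv s)
      ((hcont.mul a.continuous).intervalIntegrable _ _), ← he₀, div_self he]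
    simp
  have hcs := sq_integral_mul_le ht.1.le hcont a.continuous
  have h1 : ∫ s in t₀..t, Real.exp (lam * (s - t)) ^ 2 ≤ t₁ - t₀ := by
    calc ∫ s in t₀..t, Real.exp (lam * (s - t)) ^ 2 ≤ ∫ s in t₀..t, (1 : ℝ) := by
          refine integral_mono_on ht.1.le ((hcont.pow 2).intervalIntegrable _ _)
            intervalIntegrable_const fun s hs => pow_le_one₀ (Real.exp_nonneg _) ?_
          rw [Real.exp_le_one_iff]
          exact mul_nonpos_of_nonneg_of_nonpos hlam.le (sub_nonpos.mpr hs.2)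
      _ ≤ t₁ - t₀ := by simpa using ht.2
  have h2 : ∫ s in t₀..t, a.eval s ^ 2 ≤ ∫ s in t₀..t₁, a.eval s ^ 2 :=
    integral_mono_interval le_rfl ht.1.le ht.2 (.of_forall fun s => sq_nonneg _)
      ((a.continuous.pow 2).intervalIntegrable _ _)
  rw [← Real.sqrt_mul (sub_nonneg.mpr (ht.1.le.trans ht.2)), ← hint]
  refine Real.abs_le_sqrt (hcs.trans (mul_le_mul h1 h2 ?_ ?_))
  · exact integral_nonneg ht.1.le fun _ _ => sq_nonneg _
  · exact sub_nonneg.mpr (ht.1.le.trans ht.2)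

lemma abs_errF_div_le_iSup (lam : ℝ) (ψ : ℝ[X]) {t : ℝ} (ht : t ∈ Ioc t₀ t₁) :
    |errF t₀ lam ψ t / errF t₀ lam ψ t₀| ≤
      ⨆ s ∈ Ioc t₀ t₁, |errF t₀ lam ψ s / errF t₀ lam ψ t₀| := by
  have hc : Continuous fun s => |errF t₀ lam ψ s / errF t₀ lam ψ t₀| := by
    have := ψ.continuous
    unfold errF
    fun_prop
  obtain ⟨M, hM⟩ := (isCompact_Icc (a := t₀) (b := t₁)).bddAbove_image hc.continuousOn
  have hM' : ∀ s ∈ Ioc t₀ t₁, |errF t₀ lam ψ s / errF t₀ lam ψ t₀| ≤ M :=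
    fun s hs => hM ⟨s, Ioc_subset_Icc_self hs, rfl⟩
  have hM0 : 0 ≤ M := (abs_nonneg _).trans (hM' t ht)
  have hb : BddAbove (range fun s => ⨆ (_ : s ∈ Ioc t₀ t₁),
      |errF t₀ lam ψ s / errF t₀ lam ψ t₀|) := by
    refine ⟨M, ?_⟩
    rintro _ ⟨s, rfl⟩
    exact Real.iSup_le (fun hs => hM' s hs) hM0
  refine le_trans ?_ (le_ciSup hb t)
  simp only [ht, ciSup_unique, le_refl]

lemma CL2_nonneg (r : ℕ) (lam : ℝ) (ψ : ℝ[X]) : 0 ≤ CL2 t₀ t₁ r lam ψ :=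
  add_nonneg (mul_nonneg (Real.sqrt_nonneg _)
    (Real.iSup_nonneg fun _ => Real.iSup_nonneg fun _ => abs_nonneg _)) zero_le_one

/-- `L^∞`-stability of the inverse of the scalar dG operator. -/
lemma IsLegendreBasis.abs_eval_le (hK : IsLegendreBasis t₀ t₁ K) {r : ℕ} {lam : ℝ}
    (hlam : 0 < lam) {ψ v : ℝ[X]} (hψ : Gam t₀ t₁ r K lam ψ = Lop t₀ t₁ r K 1)
    (hv : v.natDegree ≤ r) {t : ℝ} (ht : t ∈ Ioc t₀ t₁) :
    |v.eval t| ≤ CL2 t₀ t₁ r lam ψ * √(t₁ - t₀) *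
      √(∫ s in t₀..t₁, (Gam t₀ t₁ r K lam v).eval s ^ 2) := by
  have h01 : t₀ < t₁ := ht.1.trans_le ht.2
  have hk : 0 < t₁ - t₀ := sub_pos.mpr h01
  have h0 : |v.eval t₀| ≤ Upsilon r ((t₁ - t₀) * lam) * √(t₁ - t₀) *
      √(∫ s in t₀..t₁, (Gam t₀ t₁ r K lam v).eval s ^ 2) := by
    rw [Upsilon, ← Real.sqrt_mul (by positivity), ← Real.sqrt_mul (by positivity)]
    exact Real.abs_le_sqrt (hK.eval_left_sq_le h01 hlam hv)
  have h1 := abs_eval_sub_mul_errF_le hlam (v := v) hψ ht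
  have h2 := abs_errF_div_le_iSup lam ψ ht
  have h3 := mul_le_mul h0 h2 (abs_nonneg _) ((abs_nonneg _).trans h0)
  have h4 := abs_add_le (v.eval t - v.eval t₀ * (errF t₀ lam ψ t / errF t₀ lam ψ t₀))
    (v.eval t₀ * (errF t₀ lam ψ t / errF t₀ lam ψ t₀))
  rw [sub_add_cancel, abs_mul] at h4
  rw [CL2]
  linarith

end Legendre

/-- `L^∞(H)`-stability of the inverse of the fully discrete parabolic dG operator, in an
orthonormal eigenbasis of the discrete elliptic operator with eigenvalues `λ_1, …, λ_n`. -/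
theorem stmt_18 (t₀ t₁ : ℝ) (ht : t₀ < t₁) (r : ℕ) (K : ℕ → Polynomial ℝ)
    (hK : IsLegendreBasis t₀ t₁ K) (n : ℕ) (hn : 1 ≤ n)
    (lam : Fin n → ℝ) (hlam : ∀ i, 0 < lam i)
    (ψ : Fin n → Polynomial ℝ) (hψdeg : ∀ i, (ψ i).natDegree ≤ r)
    (hψ : ∀ i, Gam t₀ t₁ r K (lam i) (ψ i) = Lop t₀ t₁ r K 1)
    (a v : Fin n → Polynomial ℝ)
    (ha : ∀ i, (a i).natDegree ≤ r) (hvdeg : ∀ i, (v i).natDegree ≤ r)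
    (hΓ : ∀ i, Gam t₀ t₁ r K (lam i) (v i) = a i) :
    ∀ t ∈ Set.Ioc t₀ t₁,
      Real.sqrt (∑ i, ((v i).eval t) ^ 2) ≤
        (⨆ i, CL2 t₀ t₁ r (lam i) (ψ i)) * Real.sqrt (t₁ - t₀) *
          Real.sqrt (∫ s in t₀..t₁, ∑ i, ((a i).eval s) ^ 2) := by
  intro t htI
  have hC : ∀ i, CL2 t₀ t₁ r (lam i) (ψ i) ≤ ⨆ i, CL2 t₀ t₁ r (lam i) (ψ i) :=
    le_ciSup (Set.finite_range _).bddAbove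
  have hM : 0 ≤ ⨆ i, CL2 t₀ t₁ r (lam i) (ψ i) := Real.iSup_nonneg fun i => CL2_nonneg ..
  have hk : 0 ≤ t₁ - t₀ := sub_nonneg.mpr ht.le
  have hpos : ∀ i, 0 ≤ ∫ s in t₀..t₁, ((a i).eval s) ^ 2 :=
    fun i => integral_nonneg ht.le fun _ _ => sq_nonneg _
  refine Real.sqrt_le_iff.mpr ⟨by positivity, ?_⟩
  rw [mul_pow, Real.sq_sqrt (integral_nonneg ht.le fun _ _ => by positivity),
    intervalIntegral.integral_finsetSum (f := fun i s => (a i).eval s ^ 2)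
      fun i _ => ((a i).continuous.pow 2).intervalIntegrable _ _, Finset.mul_sum]
  refine Finset.sum_le_sum fun i _ => ?_
  have h := hK.abs_eval_le (hlam i) (hψ i) (hvdeg i) htI
  rw [hΓ i] at h
  rw [← Real.sq_sqrt (hpos i), ← mul_pow, ← sq_abs]
  refine pow_le_pow_left₀ (abs_nonneg _) (h.trans ?_) 2
  gcongr
  exact hC i
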